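/- Every finite subgroup of GL_2(ℤ) is isomorphic to one of the groups C_1, C_2, C_3, C_4, C_6, D_1, D_2, D_3, D_4, D_6, where C_p is the cyclic group of order p and D_p is the dihedral group of order 2p. -/

import Mathlib

/-!
A finite group `H ≤ GL₂(ℤ)` preserves the form `A x² + 2 B x y + C y²` with matrix `∑ hᵀ h`, which
is positive definite (`exists_invariant_form`).

Let `K` be the kernel of the determinant on `H`. The root `τ` of `A τ² + 2 B τ + C = 0` in the upper
half plane is fixed by `K`, so `(τ, 1)` is a common eigenvector and its eigenvalue `g ↦ c τ + d` is a
homomorphism `K → ℂ`. It is injective, so `K` is cyclic (`isCyclic_kernel`). Invariance of the form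
forces `|tr g| ≤ 2` for `g ∈ K`, with equality only for `g = ±1`; by Cayley-Hamilton `g ^ 4 = 1` or
`g ^ 6 = 1`, which restricts `|K|` (`pow_four_or_six`).

If `H ≠ K`, any `s ∈ H` of determinant `-1` has `tr (s²) = (tr s)² + 2`, so the trace bound applied to
`s²` gives `tr s = 0` and `s² = 1`. Applying this to `s k` for `k ∈ K` shows that `s` inverts `K`,
and `H` is dihedral (`dihedral_of_inverting`).
-/

open Matrix in
lemma exists_invariant_form (H : Subgroup (GL (Fin 2) ℤ)) [Finite H] :
    ∃ A B C : ℤ, 0 < A ∧ 0 < A * C - B ^ 2 ∧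
      ∀ h : H, (h.1.1)ᵀ * !![A, B; B, C] * h.1.1 = !![A, B; B, C] := by
  classical
  cases nonempty_fintype H
  set S : Matrix (Fin 2) (Fin 2) ℤ := ∑ h : H, (h.1.1)ᵀ * h.1.1 with hS
  have hinv (g : H) : (g.1.1)ᵀ * S * g.1.1 = S := by
    rw [hS, Finset.mul_sum, Finset.sum_mul]
    refine Fintype.sum_equiv (Equiv.mulRight g) _ _ fun h => ?_
    simp [Matrix.transpose_mul, Matrix.mul_assoc]
  have hA : S 0 0 = ∑ h : H, (h.1.1 0 0 ^ 2 + h.1.1 1 0 ^ 2) := by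
    simp [hS, Matrix.sum_apply, Matrix.mul_apply, Fin.sum_univ_two, sq]
  have hB : S 0 1 = ∑ h : H, (h.1.1 0 0 * h.1.1 0 1 + h.1.1 1 0 * h.1.1 1 1) := by
    simp [hS, Matrix.sum_apply, Matrix.mul_apply, Fin.sum_univ_two]
  have hB' : S 1 0 = S 0 1 := by
    simp [hS, Matrix.sum_apply, Matrix.mul_apply, Fin.sum_univ_two, mul_comm]
  have hC : S 1 1 = ∑ h : H, (h.1.1 0 1 ^ 2 + h.1.1 1 1 ^ 2) := by
    simp [hS, Matrix.sum_apply, Matrix.mul_apply, Fin.sum_univ_two, sq]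
  -- The value of the form at `(x, y)` is at least the summand of `h = 1`.
  have hpos (x y : ℤ) : x ^ 2 + y ^ 2 ≤ S 0 0 * x ^ 2 + 2 * S 0 1 * x * y + S 1 1 * y ^ 2 := by
    have hval : S 0 0 * x ^ 2 + 2 * S 0 1 * x * y + S 1 1 * y ^ 2 =
        ∑ h : H, ((h.1.1 0 0 * x + h.1.1 0 1 * y) ^ 2 + (h.1.1 1 0 * x + h.1.1 1 1 * y) ^ 2) := by
      rw [hA, hB, hC]
      simp only [Finset.sum_mul, Finset.mul_sum, ← Finset.sum_add_distrib]
      exact Finset.sum_congr rfl fun h _ => by ring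
    rw [hval]
    refine le_trans (le_of_eq ?_) (Finset.single_le_sum (fun h _ => by positivity)
      (Finset.mem_univ (1 : H)))
    simp
  have hA0 : 0 < S 0 0 := by nlinarith [hpos 1 0]
  refine ⟨S 0 0, S 0 1, S 1 1, hA0, ?_, fun h => ?_⟩
  · -- At `(-B, A)` the form takes the value `A (A C - B²)`.
    have h := hpos (-S 0 1) (S 0 0)
    by_contra! hle
    nlinarith [mul_nonneg hA0.le (sub_nonneg.2 hle), sq_nonneg (S 0 1), mul_pos hA0 hA0]
  · have : !![S 0 0, S 0 1; S 0 1, S 1 1] = S := by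
      conv_rhs => rw [Matrix.eta_fin_two S, hB']
    rw [this, hinv]

/-- Entrywise form of `gᵀ S = S g⁻¹` for a symmetric matrix `S` preserved by a matrix `g` of
determinant one. -/
lemma entries_of_invariant {A B C : ℤ} {g : Matrix (Fin 2) (Fin 2) ℤ}
    (hg : g.transpose * !![A, B; B, C] * g = !![A, B; B, C]) (hd : g.det = 1) :
    A * (g 1 1 - g 0 0) = 2 * B * g 1 0 ∧ C * g 1 0 = -(A * g 0 1) := by
  have h : g.transpose * !![A, B; B, C] = !![A, B; B, C] * g.adjugate := by
    have := congrArg (· * g.adjugate) hg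
    simpa [Matrix.mul_assoc, Matrix.mul_adjugate, hd] using this
  have h00 := congrFun (congrFun h 0) 0
  have h01 := congrFun (congrFun h 0) 1
  simp [Matrix.mul_apply, Fin.sum_univ_two, Matrix.adjugate_fin_two] at h00 h01
  constructor <;> linarith

/-- The trace bound: the discriminant `t² - 4` of the characteristic polynomial satisfies
`A² (t² - 4) = -4 c² (A C - B²)`. -/
lemma trace_bound {A B C a b c d : ℤ} (hA : 0 < A) (hD : 0 < A * C - B ^ 2)
    (hd : a * d - b * c = 1) (h1 : A * (d - a) = 2 * B * c) (h2 : C * c = -(A * b)) :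
    (a + d) ^ 2 < 4 ∨ (c = 0 ∧ b = 0 ∧ a = d) := by
  have key : A ^ 2 * ((a + d) ^ 2 - 4) = -(4 * c ^ 2 * (A * C - B ^ 2)) := by
    linear_combination (A * (d - a) + 2 * B * c) * h1 + 4 * A * c * h2 + 4 * A ^ 2 * hd
  by_cases hc : c = 0
  · subst hc
    right
    have hb : b = 0 := by
      have : A * b = 0 := by linarith
      exact (mul_eq_zero.1 this).resolve_left hA.ne'
    have had : d - a = 0 := by
      have : A * (d - a) = 0 := by linarith
      exact (mul_eq_zero.1 this).resolve_left hA.ne'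
    exact ⟨rfl, hb, by linarith⟩
  · left
    have : 0 < c ^ 2 := by positivity
    by_contra! hle
    nlinarith [mul_pos this hD, mul_nonneg (sq_nonneg A) (sub_nonneg.2 hle)]

lemma pow_four_or_six {A B C : ℤ} (hA : 0 < A) (hD : 0 < A * C - B ^ 2)
    {g : Matrix (Fin 2) (Fin 2) ℤ}
    (hg : g.transpose * !![A, B; B, C] * g = !![A, B; B, C]) (hd : g.det = 1) :
    g ^ 4 = 1 ∨ g ^ 6 = 1 := by
  obtain ⟨h1, h2⟩ := entries_of_invariant hg hd
  have hdet := hd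
  rw [Matrix.det_fin_two] at hd
  have hsq : g ^ 2 = (g 0 0 + g 1 1) • g - 1 := by
    ext i j
    fin_cases i <;> fin_cases j <;>
      simp [sq, Matrix.mul_apply, Fin.sum_univ_two, -zsmul_eq_mul] <;>
      first | linear_combination -hd | ring
  rcases trace_bound hA hD hd h1 h2 with ht | ⟨hc, hb, had⟩
  · have hlt : g 0 0 + g 1 1 < 2 := by nlinarith
    have hgt : -2 < g 0 0 + g 1 1 := by nlinarith
    obtain h | h | h : g 0 0 + g 1 1 = -1 ∨ g 0 0 + g 1 1 = 0 ∨ g 0 0 + g 1 1 = 1 := by omega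
    all_goals rw [h] at hsq
    · right
      have h3 : g ^ 3 = 1 := by
        rw [pow_succ, hsq]; simp only [neg_smul, one_smul, sub_mul, neg_mul, one_mul, ← sq, hsq]
        abel
      rw [show 6 = 3 * 2 from rfl, pow_mul, h3, one_pow]
    · left
      rw [show 4 = 2 * 2 from rfl, pow_mul, hsq]; simp
    · right
      have h3 : g ^ 3 = -1 := by
        rw [pow_succ, hsq]; simp only [one_smul, sub_mul, one_mul, ← sq, hsq]
        abel
      rw [show 6 = 3 * 2 from rfl, pow_mul, h3]; simp
  · left
    have h2 : g ^ 2 = 1 := by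
      rw [hb, had] at hd
      ext i j
      fin_cases i <;> fin_cases j <;>
        simp [sq, Matrix.mul_apply, Fin.sum_univ_two, hb, hc, had] <;> linarith
    rw [show 4 = 2 * 2 from rfl, pow_mul, h2, one_pow]

lemma sq_eq_one_of_det_neg {A B C : ℤ} (hA : 0 < A) (hD : 0 < A * C - B ^ 2)
    {s : Matrix (Fin 2) (Fin 2) ℤ}
    (hs : s.transpose * !![A, B; B, C] * s = !![A, B; B, C]) (hd : s.det = -1) :
    s * s = 1 := by
  have hs2 : (s * s).transpose * !![A, B; B, C] * (s * s) = !![A, B; B, C] := by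
    calc _ = s.transpose * (s.transpose * !![A, B; B, C] * s) * s := by
          simp [Matrix.transpose_mul, Matrix.mul_assoc]
      _ = _ := by rw [hs, hs]
  have hd2 : (s * s).det = 1 := by simp [Matrix.det_mul, hd]
  obtain ⟨h1, h2⟩ := entries_of_invariant hs2 hd2
  rw [Matrix.det_fin_two] at hd hd2
  have htr : (s * s) 0 0 + (s * s) 1 1 = (s 0 0 + s 1 1) ^ 2 + 2 := by
    simp [Matrix.mul_apply, Fin.sum_univ_two]; linear_combination -2 * hd
  have ht : s 0 0 + s 1 1 = 0 := by
    have hle : ((s 0 0 + s 1 1) ^ 2 + 2) ^ 2 ≤ 4 := by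
      rcases trace_bound hA hD hd2 h1 h2 with h | ⟨hc, hb, had⟩
      · rw [← htr]; exact h.le
      · rw [← htr]; rw [hc, hb, had] at hd2; rw [had]; nlinarith
    have : (s 0 0 + s 1 1) ^ 2 ≤ 0 := by nlinarith [sq_nonneg (s 0 0 + s 1 1)]
    exact pow_eq_zero_iff two_ne_zero |>.1 (le_antisymm this (sq_nonneg _))
  have hsd : s 1 1 = -s 0 0 := by linarith
  rw [hsd] at hd
  ext i j
  fin_cases i <;> fin_cases j <;>
    simp [Matrix.mul_apply, Fin.sum_univ_two, hsd] <;> linarith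

/-- `g ↦ c τ + d`, where `τ` is the root of the invariant form in the upper half plane, is a faithful
character of the group. -/
lemma isCyclic_kernel {G : Type*} [Group G] [Finite G] (M : G →* Matrix (Fin 2) (Fin 2) ℤ)
    (hM : Function.Injective M) {A B C : ℤ} (hA : 0 < A) (hD : 0 < A * C - B ^ 2)
    (hinv : ∀ g, (M g).transpose * !![A, B; B, C] * M g = !![A, B; B, C])
    (hdet : ∀ g, (M g).det = 1) : IsCyclic G := by
  obtain ⟨τ, hτ, him⟩ : ∃ τ : ℂ, A * τ ^ 2 + 2 * B * τ + C = 0 ∧ τ.im ≠ 0 := by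
    have hA' : (0 : ℝ) < A := by exact_mod_cast hA
    have hD' : (0 : ℝ) < A * C - B ^ 2 := by exact_mod_cast hD
    have hr := Real.sq_sqrt hD'.le
    have hr0 := Real.sqrt_pos.2 hD'
    set r := Real.sqrt (A * C - B ^ 2)
    refine ⟨⟨-B / A, r / A⟩, ?_, (div_pos hr0 hA').ne'⟩
    apply Complex.ext
    · simp [sq]
      field_simp
      linear_combination -hr
    · simp [sq]
      field_simp
      ring
  have hAC : (A : ℂ) ≠ 0 := Int.cast_ne_zero.2 (ne_of_gt hA)
  -- `(τ, 1)` is an eigenvector of `M g`.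
  have heig (g : G) : (M g 0 0 : ℂ) * τ + M g 0 1 = τ * (M g 1 0 * τ + M g 1 1) := by
    obtain ⟨h1, h2⟩ := entries_of_invariant (hinv g) (hdet g)
    have h1' : (A : ℂ) * (M g 1 1 - M g 0 0) = 2 * B * M g 1 0 := by exact_mod_cast h1
    have h2' : (C : ℂ) * M g 1 0 = -(A * M g 0 1) := by exact_mod_cast h2
    apply mul_left_cancel₀ hAC
    linear_combination -τ * h1' + h2' - M g 1 0 * hτ
  let φ : G →* ℂ :=
    { toFun := fun g => M g 1 0 * τ + M g 1 1
      map_one' := by simp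
      map_mul' := fun g h => by
        simp only [map_mul, Matrix.mul_apply, Fin.sum_univ_two]
        push_cast
        linear_combination (M g 1 0 : ℂ) * heig h }
  refine isCyclic_of_injective_ringHom φ ((injective_iff_map_eq_one φ).2 fun g hg => ?_)
  replace hg : (M g 1 0 : ℂ) * τ + M g 1 1 = 1 := hg
  have hc : M g 1 0 = 0 := by
    have := congrArg Complex.im hg
    simpa [him] using this
  have hd : M g 1 1 = 1 := by
    rw [hc] at hg
    simpa using hg
  obtain ⟨h1, h2⟩ := entries_of_invariant (hinv g) (hdet g)
  simp only [hc, hd, mul_zero, mul_eq_zero, hA.ne', false_or, zero_eq_neg] at h1 h2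
  apply hM
  rw [map_one]
  ext i j
  fin_cases i <;> fin_cases j <;> simp [hc, hd, h2]
  linarith

/-- A group is dihedral as soon as it is the union of a cyclic subgroup `K` and a coset `s K`, where
`s` is an involution outside `K` that inverts `K`. -/
lemma dihedral_of_inverting {G : Type*} [Group G] (K : Subgroup G) [IsCyclic K] {s : G}
    (hsK : s ∉ K) (hs : s * s = 1) (hinv : ∀ k ∈ K, k * s = s * k⁻¹)
    (hcover : ∀ g, g ∈ K ∨ s * g ∈ K) : Nonempty (G ≃* DihedralGroup (Nat.card K)) := by
  let e := zmodCyclicMulEquiv (G := K) inferInstance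
  let f : ZMod (Nat.card K) → G := fun i => (e (Multiplicative.ofAdd i) : G)
  have f_mem (i) : f i ∈ K := (e (Multiplicative.ofAdd i)).2
  have f_add (i j) : f (i + j) = f i * f j := by simp [f, ofAdd_add]
  have f_sub (i j) : f (j - i) = (f i)⁻¹ * f j := by
    rw [eq_inv_mul_iff_mul_eq, ← f_add, add_sub_cancel]
  have f_inj {i j} (h : f i = f j) : i = j :=
    Multiplicative.ofAdd.injective (e.injective (Subtype.ext h))
  have f_surj {k} (hk : k ∈ K) : ∃ i, f i = k :=
    ⟨(e.symm ⟨k, hk⟩).toAdd, by simp [f]⟩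
  have not_mem {k} (hk : k ∈ K) : s * k ∉ K := fun h => hsK ((K.mul_mem_cancel_right hk).1 h)
  let F : DihedralGroup (Nat.card K) →* G :=
    { toFun := fun x => match x with
        | .r i => f i
        | .sr i => s * f i
      map_one' := by
        rw [DihedralGroup.one_def]
        simp [f]
      map_mul' := by
        rintro (i | i) (j | j)
        · exact f_add i j
        · change s * f (j - i) = f i * (s * f j)
          rw [f_sub, ← mul_assoc, ← mul_assoc, hinv _ (f_mem i)]
        · change s * f (i + j) = s * f i * f j
          rw [f_add, mul_assoc]
        · change f (j - i) = s * f i * (s * f j)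
          rw [f_sub, mul_assoc, ← mul_assoc (f i), hinv _ (f_mem i), mul_assoc, ← mul_assoc s s, hs,
            one_mul] }
  refine ⟨(MulEquiv.ofBijective F ⟨?_, fun g => ?_⟩).symm⟩
  · rintro (i | i) (j | j) h
    · exact congrArg DihedralGroup.r (f_inj h)
    · change f i = s * f j at h
      exact absurd (h ▸ f_mem i) (not_mem (f_mem j))
    · change s * f i = f j at h
      exact absurd (h ▸ f_mem j) (not_mem (f_mem i))
    · exact congrArg DihedralGroup.sr (f_inj (mul_left_cancel h))
  · rcases hcover g with h | h
    · obtain ⟨i, hi⟩ := f_surj h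
      exact ⟨.r i, hi⟩
    · obtain ⟨i, hi⟩ := f_surj h
      refine ⟨.sr i, ?_⟩
      change s * f i = g
      rw [hi, ← mul_assoc, hs, one_mul]

theorem finite_subgroups_of_GL2Z (H : Subgroup (GL (Fin 2) ℤ)) (hH : Finite H) :
    (∃ p ∈ ({1, 2, 3, 4, 6} : Set ℕ), Nonempty (H ≃* Multiplicative (ZMod p))) ∨
    (∃ p ∈ ({1, 2, 3, 4, 6} : Set ℕ), Nonempty (H ≃* DihedralGroup p)) := by
  obtain ⟨A, B, C, hA, hD, hinv⟩ := exists_invariant_form H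
  let δ : H →* ℤˣ := Matrix.GeneralLinearGroup.det.comp H.subtype
  let M : H →* Matrix (Fin 2) (Fin 2) ℤ := (Units.coeHom _).comp H.subtype
  have hM : Function.Injective M := Units.val_injective.comp Subtype.val_injective
  set K := δ.ker with hK
  have hKdet (k : K) : (M k).det = 1 := by
    change ((δ k : ℤˣ) : ℤ) = 1
    rw [MonoidHom.mem_ker.1 k.2, Units.val_one]
  have hcyc : IsCyclic K := isCyclic_kernel (M.comp K.subtype)
    (hM.comp Subtype.val_injective) hA hD (fun g => hinv g) hKdet
  have hcard : Nat.card K ∈ ({1, 2, 3, 4, 6} : Set ℕ) := by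
    obtain ⟨g, hg⟩ := IsCyclic.exists_ofOrder_eq_natCard (α := K)
    have hpow {n : ℕ} (h : M g ^ n = 1) : Nat.card K ∣ n := by
      rw [← hg]
      apply orderOf_dvd_of_pow_eq_one
      apply Subtype.val_injective
      apply hM
      simpa using h
    have hn : Nat.card K ∣ 4 ∨ Nat.card K ∣ 6 :=
      (pow_four_or_six hA hD (hinv g) (hKdet g)).imp hpow hpow
    have hle : Nat.card K ≤ 6 := by
      rcases hn with h | h <;> have := Nat.le_of_dvd (by norm_num) h <;> omega
    generalize Nat.card K = n at hn hle
    interval_cases n <;> simp_all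
  by_cases htop : K = ⊤
  · left
    refine ⟨_, hcard, ⟨?_⟩⟩
    exact ((zmodCyclicMulEquiv hcyc).trans
      ((MulEquiv.subgroupCongr htop).trans Subgroup.topEquiv)).symm
  · right
    obtain ⟨s, hs⟩ : ∃ s, s ∉ K := by
      by_contra! h
      exact htop ((Subgroup.eq_top_iff' K).2 h)
    have hneg {h : H} (hh : h ∉ K) : δ h = -1 :=
      (Int.units_eq_one_or (δ h)).resolve_left hh
    have hsq {h : H} (hh : h ∉ K) : h * h = 1 := by
      apply hM
      rw [map_mul, map_one]
      refine sq_eq_one_of_det_neg hA hD (hinv h) ?_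
      change ((δ h : ℤˣ) : ℤ) = -1
      rw [hneg hh, Units.val_neg, Units.val_one]
    refine ⟨_, hcard, dihedral_of_inverting K hs (hsq hs) (fun k hk => ?_) fun g => ?_⟩
    · -- `s k` also has determinant `-1`, hence is an involution.
      have h := hsq (h := s * k) fun h => hs ((K.mul_mem_cancel_right hk).1 h)
      have h2 : k * (s * k) = s := by
        rw [mul_assoc] at h
        rw [eq_inv_of_mul_eq_one_right h, inv_eq_of_mul_eq_one_left (hsq hs)]
      rw [eq_mul_inv_iff_mul_eq, mul_assoc, h2]
    · by_cases hg : g ∈ K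
      · exact Or.inl hg
      · right
        rw [hK, MonoidHom.mem_ker, map_mul, hneg hs, hneg hg]
        rfl
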